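/- Let m ≥ 3 and k ≥ 1. Write f ∈ C^∞(ℝ^m, H_k) as f = f_1 + f_2 via the Almansi–Fischer decomposition, with f_1 ∈ C^∞(ℝ^m, M_k) and f_2 ∈ C^∞(ℝ^m, uM_{k−1}). Then the bosonic Laplacian acts as D_k f = −R_k² P_k^+ f_1 + (2/(m+2k−4)) R_k T_k P_k^− f_2 − (2/(m+2k−4)) Q_k T_k^* P_k^+ f_1 − ((m+2k)/(m+2k−4)) Q_k² P_k^− f_2. -/

import Mathlib

open scoped BigOperators

/-- The defining Clifford relations `e i * e j + e j * e i = -2 δ_{ij}` for the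
generators of the real Clifford algebra `Cl_m`. -/
def CliffordRel {m : ℕ} {Cl : Type*} [Ring Cl] [Algebra ℝ Cl] (e : Fin m → Cl) : Prop :=
  ∀ i j : Fin m, e i * e j + e j * e i = algebraMap ℝ Cl (if i = j then -2 else 0)

/-- The embedding of `ℝ^m` into the Clifford algebra, `x ↦ ∑ j, x j • e j`. -/
def emb {m : ℕ} {Cl : Type*} [Ring Cl] [Algebra ℝ Cl] (e : Fin m → Cl)
    (x : Fin m → ℝ) : Cl :=
  ∑ j, x j • e j

/-- The partial derivative `∂f/∂x_j`. -/
noncomputable def pd {m : ℕ} {E : Type*} [NormedAddCommGroup E] [NormedSpace ℝ E]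
    (j : Fin m) (f : (Fin m → ℝ) → E) : (Fin m → ℝ) → E :=
  fun x => fderiv ℝ f x (Pi.single j 1)

/-- The Laplacian `Δ f = ∑ j, ∂²f/∂x_j²`. -/
noncomputable def lap {m : ℕ} {E : Type*} [NormedAddCommGroup E] [NormedSpace ℝ E]
    (f : (Fin m → ℝ) → E) : (Fin m → ℝ) → E :=
  fun x => ∑ j, pd j (pd j f) x

/-- The Dirac operator `D f = ∑ j, e j * ∂f/∂x_j` (left Clifford multiplication). -/
noncomputable def dirac {m : ℕ} {Cl : Type*} [NormedRing Cl] [NormedAlgebra ℝ Cl]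
    (e : Fin m → Cl) (f : (Fin m → ℝ) → Cl) : (Fin m → ℝ) → Cl :=
  fun x => ∑ j, e j * pd j f x

/-- `f : ℝ^m → E` is a (module-valued) polynomial homogeneous of degree `k`:
it lies in the real span of the monomial functions `x ↦ (∏ i, x i ^ α i) • c`
with total degree `∑ i, α i = k`. -/
def IsHomPoly {m : ℕ} {E : Type*} [AddCommGroup E] [Module ℝ E] (k : ℕ)
    (f : (Fin m → ℝ) → E) : Prop :=
  f ∈ Submodule.span ℝ {g : (Fin m → ℝ) → E |
    ∃ (α : Fin m → ℕ) (c : E), (∑ i, α i) = k ∧ g = fun x => (∏ i, x i ^ α i) • c}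

/-- Partial derivative `∂/∂x_j` of a function of two variables `(x, u)`. -/
noncomputable def pdx {m : ℕ} {E : Type*} [NormedAddCommGroup E] [NormedSpace ℝ E]
    (j : Fin m) (f : (Fin m → ℝ) → (Fin m → ℝ) → E) :
    (Fin m → ℝ) → (Fin m → ℝ) → E :=
  fun x u => fderiv ℝ (fun y => f y u) x (Pi.single j 1)

/-- Partial derivative `∂/∂u_j` of a function of two variables `(x, u)`. -/
noncomputable def pdu {m : ℕ} {E : Type*} [NormedAddCommGroup E] [NormedSpace ℝ E]
    (j : Fin m) (f : (Fin m → ℝ) → (Fin m → ℝ) → E) :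
    (Fin m → ℝ) → (Fin m → ℝ) → E :=
  fun x u => fderiv ℝ (fun v => f x v) u (Pi.single j 1)

/-- The Laplacian `Δ_x` in the variable `x`. -/
noncomputable def lapx {m : ℕ} {E : Type*} [NormedAddCommGroup E] [NormedSpace ℝ E]
    (f : (Fin m → ℝ) → (Fin m → ℝ) → E) : (Fin m → ℝ) → (Fin m → ℝ) → E :=
  fun x u => ∑ j, pdx j (pdx j f) x u

/-- The mixed operator `⟨∇_u, ∇_x⟩ = ∑ j, ∂_{u_j} ∂_{x_j}`. -/
noncomputable def mixDer {m : ℕ} {E : Type*} [NormedAddCommGroup E] [NormedSpace ℝ E]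
    (f : (Fin m → ℝ) → (Fin m → ℝ) → E) : (Fin m → ℝ) → (Fin m → ℝ) → E :=
  fun x u => ∑ j, pdu j (pdx j f) x u

/-- The Dirac operator `D_x = ∑ j, e j ∂_{x_j}` acting in the variable `x`. -/
noncomputable def diracx {m : ℕ} {Cl : Type*} [NormedRing Cl] [NormedAlgebra ℝ Cl]
    (e : Fin m → Cl) (f : (Fin m → ℝ) → (Fin m → ℝ) → Cl) :
    (Fin m → ℝ) → (Fin m → ℝ) → Cl :=
  fun x u => ∑ j, e j * pdx j f x u

/-- The Dirac operator `D_u = ∑ j, e j ∂_{u_j}` acting in the variable `u`. -/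
noncomputable def diracu {m : ℕ} {Cl : Type*} [NormedRing Cl] [NormedAlgebra ℝ Cl]
    (e : Fin m → Cl) (f : (Fin m → ℝ) → (Fin m → ℝ) → Cl) :
    (Fin m → ℝ) → (Fin m → ℝ) → Cl :=
  fun x u => ∑ j, e j * pdu j f x u

/-- The bosonic Laplacian (higher spin Laplace operator)
`D_k = Δ_x − 4⟨u,∇_x⟩⟨∇_u,∇_x⟩/(m+2k−2) + 4|u|²⟨∇_u,∇_x⟩²/((m+2k−2)(m+2k−4))`. -/
noncomputable def bosonic {m : ℕ} (k : ℕ) {E : Type*} [NormedAddCommGroup E]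
    [NormedSpace ℝ E] (f : (Fin m → ℝ) → (Fin m → ℝ) → E) :
    (Fin m → ℝ) → (Fin m → ℝ) → E :=
  fun x u =>
    lapx f x u
      - (4 / ((m : ℝ) + 2 * k - 2)) • ∑ s, u s • pdx s (mixDer f) x u
      + (4 / (((m : ℝ) + 2 * k - 2) * ((m : ℝ) + 2 * k - 4))) •
          ((∑ i, u i ^ 2) • mixDer (mixDer f) x u)

/-- The projection `P_k^+ = I + u D_u/(m+2k−2)` acting in the variable `u`
(`u` acts by left Clifford multiplication). -/
noncomputable def PpU {m : ℕ} {Cl : Type*} [NormedRing Cl] [NormedAlgebra ℝ Cl]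
    (e : Fin m → Cl) (k : ℕ) (f : (Fin m → ℝ) → (Fin m → ℝ) → Cl) :
    (Fin m → ℝ) → (Fin m → ℝ) → Cl :=
  fun x u => f x u + ((m : ℝ) + 2 * k - 2)⁻¹ • (emb e u * diracu e f x u)

/-- The projection `P_k^- = −u D_u/(m+2k−2)` acting in the variable `u`. -/
noncomputable def PmU {m : ℕ} {Cl : Type*} [NormedRing Cl] [NormedAlgebra ℝ Cl]
    (e : Fin m → Cl) (k : ℕ) (f : (Fin m → ℝ) → (Fin m → ℝ) → Cl) :
    (Fin m → ℝ) → (Fin m → ℝ) → Cl :=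
  fun x u => -(((m : ℝ) + 2 * k - 2)⁻¹ • (emb e u * diracu e f x u))

/-- `P_k^+ D_x`: this is the Rarita–Schwinger operator `R_k` on `C^∞(ℝ^m, M_k)` and the
twistor operator `T_k` on `C^∞(ℝ^m, uM_{k-1})`. -/
noncomputable def PpDx {m : ℕ} {Cl : Type*} [NormedRing Cl] [NormedAlgebra ℝ Cl]
    (e : Fin m → Cl) (k : ℕ) (f : (Fin m → ℝ) → (Fin m → ℝ) → Cl) :
    (Fin m → ℝ) → (Fin m → ℝ) → Cl :=
  PpU e k (diracx e f)

/-- `P_k^- D_x`: this is the dual twistor operator `T_k^*` on `C^∞(ℝ^m, M_k)` and the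
remaining operator `Q_k` on `C^∞(ℝ^m, uM_{k-1})`. -/
noncomputable def PmDx {m : ℕ} {Cl : Type*} [NormedRing Cl] [NormedAlgebra ℝ Cl]
    (e : Fin m → Cl) (k : ℕ) (f : (Fin m → ℝ) → (Fin m → ℝ) → Cl) :
    (Fin m → ℝ) → (Fin m → ℝ) → Cl :=
  PmU e k (diracx e f)

section OperatorIdentities

variable {M : Type*} [AddCommGroup M] [Module ℝ M]

/-- Commutation relations between the operators `D_x`, `D_u`, multiplication by `u`,
`A = ⟨∇_u, ∇_x⟩`, `B = ⟨u, ∇_x⟩`, `L = Δ_x` and the Euler operator `E` in `u`. -/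
structure HoweRelations (μ : ℝ) (Dx Du u A B L E : Module.End ℝ M) : Prop where
  Du_Dx : ∀ f, Du (Dx f) = (-2 : ℝ) • A f - Dx (Du f)
  Dx_u : ∀ f, Dx (u f) = (-2 : ℝ) • B f - u (Dx f)
  Dx_Dx : ∀ f, Dx (Dx f) = -L f
  Du_u : ∀ f, Du (u f) = (-2 : ℝ) • E f - μ • f - u (Du f)
  Du_B : ∀ f, Du (B f) = B (Du f) + Dx f
  A_u : ∀ f, A (u f) = u (A f) + Dx f
  A_Dx : ∀ f, A (Dx f) = Dx (A f)
  Dx_B : ∀ f, Dx (B f) = B (Dx f)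
  B_u : ∀ f, B (u f) = u (B f)
  Du_A : ∀ f, Du (A f) = A (Du f)
  Du_L : ∀ f, Du (L f) = L (Du f)
  L_u : ∀ f, L (u f) = u (L f)
  E_A : ∀ f, E (A f) = A (E f) - A f
  E_u : ∀ f, E (u f) = u (E f) + u f
  E_Dx : ∀ f, E (Dx f) = Dx (E f)
  E_L : ∀ f, E (L f) = L (E f)

/-- The operator form of `P_k^+`, where `N = m + 2k - 2`. -/
noncomputable def projPlus (N : ℝ) (Du u : Module.End ℝ M) : Module.End ℝ M :=
  1 + N⁻¹ • (u * Du)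

/-- The operator form of `P_k^-`, where `N = m + 2k - 2`. -/
noncomputable def projMinus (N : ℝ) (Du u : Module.End ℝ M) : Module.End ℝ M :=
  -(N⁻¹ • (u * Du))

lemma projPlus_apply (N : ℝ) (Du u : Module.End ℝ M) (f : M) :
    projPlus N Du u f = f + N⁻¹ • u (Du f) := rfl

lemma projMinus_apply (N : ℝ) (Du u : Module.End ℝ M) (f : M) :
    projMinus N Du u f = -(N⁻¹ • u (Du f)) := rfl

namespace HoweRelations

variable {μ : ℝ} {Dx Du u A B L E : Module.End ℝ M}

lemma bosonic_monogenic (h : HoweRelations μ Dx Du u A B L E) {κ N : ℝ}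
    (hμ : μ = N + 2 - 2 * κ) (hN : N ≠ 0) (hN2 : N - 2 ≠ 0) {f : M}
    (hD : Du f = 0) (hE : E f = κ • f) :
    L f - (4 / N) • B (A f) - (4 / (N * (N - 2))) • u (u (A (A f))) =
      -projPlus N Du u (Dx (projPlus N Du u (Dx (projPlus N Du u f))))
        - (2 / (N - 2)) •
          projMinus N Du u (Dx (projMinus N Du u (Dx (projPlus N Du u f)))) := by
  simp only [projPlus_apply, projMinus_apply, map_add, map_sub, map_neg, map_smul, map_zero,
    h.Du_Dx, h.Dx_u, h.Dx_Dx, h.Du_u, h.Du_B, h.Du_A, h.Du_L, h.E_A, h.E_Dx, hD, hE, hμ]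
  match_scalars <;> field_simp <;> ring

lemma bosonic_u_mul_monogenic (h : HoweRelations μ Dx Du u A B L E) {κ N : ℝ}
    (hμ : μ = N + 2 - 2 * κ) (hN : N ≠ 0) (hN2 : N - 2 ≠ 0) {q : M}
    (hD : Du q = 0) (hE : E q = (κ - 1) • q) :
    L (u q) - (4 / N) • B (A (u q)) - (4 / (N * (N - 2))) • u (u (A (A (u q)))) =
      (2 / (N - 2)) • projPlus N Du u (Dx (projPlus N Du u (Dx (projMinus N Du u (u q)))))
        - ((N + 2) / (N - 2)) •
          projMinus N Du u (Dx (projMinus N Du u (Dx (projMinus N Du u (u q))))) := by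
  simp only [projPlus_apply, projMinus_apply, map_add, map_sub, map_neg, map_smul, map_zero,
    h.Du_Dx, h.Dx_u, h.Dx_Dx, h.Du_u, h.Du_B, h.A_u, h.A_Dx, h.Dx_B, h.B_u, h.Du_A, h.Du_L,
    h.L_u, h.E_A, h.E_u, h.E_Dx, h.E_L, hD, hE, hμ]
  match_scalars <;> field_simp <;> ring

end HoweRelations

end OperatorIdentities

section CliffordWeyl

variable {m : ℕ} {R : Type*} [Ring R]

/-- The Clifford contraction `∑ i, ε i * a i`. -/
def slash (ε a : Fin m → R) : R := ∑ i, ε i * a i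

/-- The scalar contraction `∑ i, a i * b i`. -/
def dotOp (a b : Fin m → R) : R := ∑ i, a i * b i

lemma slash_commute {ε a : Fin m → R} {c : R} (hε : ∀ i, Commute (ε i) c)
    (ha : ∀ i, Commute (a i) c) : Commute (slash ε a) c :=
  Commute.sum_left _ _ _ fun i _ => (hε i).mul_left (ha i)

lemma dotOp_commute {a b : Fin m → R} {c : R} (ha : ∀ i, Commute c (a i))
    (hb : ∀ i, Commute c (b i)) : Commute c (dotOp a b) :=
  Commute.sum_right _ _ _ fun i _ => (ha i).mul_right (hb i)

variable [Algebra ℝ R]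

/-- The relations satisfied by left multiplication `ε` by the Clifford generators, the
partial derivatives `X` and `U` in `x` and `u`, and multiplication `Y` by the coordinates
of `u`. -/
structure CliffordWeyl (ε X U Y : Fin m → R) : Prop where
  clifford : CliffordRel ε
  comm_X : ∀ i j, Commute (ε i) (X j)
  comm_U : ∀ i j, Commute (ε i) (U j)
  comm_Y : ∀ i j, Commute (ε i) (Y j)
  X_X : ∀ i j, Commute (X i) (X j)
  U_U : ∀ i j, Commute (U i) (U j)
  Y_Y : ∀ i j, Commute (Y i) (Y j)
  X_U : ∀ i j, Commute (X i) (U j)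
  X_Y : ∀ i j, Commute (X i) (Y j)
  U_Y : ∀ i j, U i * Y j = Y j * U i + if i = j then 1 else 0

lemma slash_anticomm {ε a b : Fin m → R} (hε : CliffordRel ε)
    (ha : ∀ i j, Commute (ε i) (a j)) (hb : ∀ i j, Commute (ε i) (b j))
    (hab : ∀ i j, Commute (a i) (b j)) :
    slash ε a * slash ε b + slash ε b * slash ε a = (-2 : ℝ) • dotOp a b := by
  have key : ∀ i j, ε i * a i * (ε j * b j) + ε j * b j * (ε i * a i) =
      if i = j then (-2 : ℝ) • (a i * b j) else 0 := by
    intro i j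
    have h1 : ε i * a i * (ε j * b j) = ε i * ε j * (a i * b j) := by
      rw [mul_assoc, ← mul_assoc (a i), ← (ha j i).eq]; simp only [mul_assoc]
    have h2 : ε j * b j * (ε i * a i) = ε j * ε i * (a i * b j) := by
      rw [mul_assoc, ← mul_assoc (b j), ← (hb i j).eq, (hab i j).eq]; simp only [mul_assoc]
    rw [h1, h2, ← add_mul, hε i j]
    split_ifs <;> simp [Algebra.smul_def]
  simp only [slash, dotOp, Finset.sum_mul_sum]
  rw [Finset.sum_comm (f := fun i j => ε i * b i * (ε j * a j))]
  simp only [← Finset.sum_add_distrib, key, Finset.sum_ite_eq, Finset.mem_univ, if_true,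
    Finset.smul_sum]

lemma slash_sq {ε a : Fin m → R} (hε : CliffordRel ε)
    (ha : ∀ i j, Commute (ε i) (a j)) (haa : ∀ i j, Commute (a i) (a j)) :
    slash ε a * slash ε a = -dotOp a a := by
  have h := slash_anticomm hε ha ha haa
  have h2 : (2 : ℝ) • (slash ε a * slash ε a) = (2 : ℝ) • (-dotOp a a) := by
    rw [two_smul, h]; module
  exact smul_right_injective R (two_ne_zero (α := ℝ)) h2

namespace CliffordWeyl

variable {ε X U Y : Fin m → R}

lemma diracU_mul_slashY (h : CliffordWeyl ε X U Y) :
    slash ε U * slash ε Y =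
      (-2 : ℝ) • dotOp Y U - (m : ℝ) • (1 : R) - slash ε Y * slash ε U := by
  have key : ∀ i j, ε i * U i * (ε j * Y j) + ε j * Y j * (ε i * U i) =
      if i = j then (-2 : ℝ) • (Y j * U i) - 1 else 0 := by
    intro i j
    have h1 : ε i * U i * (ε j * Y j) =
        ε i * ε j * (Y j * U i) + ε i * ε j * (if i = j then 1 else 0) := by
      rw [mul_assoc, ← mul_assoc (U i), ← (h.comm_U j i).eq, mul_assoc (ε j), h.U_Y]
      simp only [mul_add, mul_assoc]
    have h2 : ε j * Y j * (ε i * U i) = ε j * ε i * (Y j * U i) := by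
      rw [mul_assoc, ← mul_assoc (Y j), ← (h.comm_Y i j).eq]; simp only [mul_assoc]
    rw [h1, h2, add_right_comm, ← add_mul, h.clifford i j]
    split_ifs with hij
    · subst hij
      have h3 : ε i * ε i = -1 := by
        have h4 := h.clifford i i
        rw [if_pos rfl, ← two_smul ℝ] at h4
        refine smul_right_injective R (two_ne_zero (α := ℝ)) ?_
        simp only [h4, Algebra.algebraMap_eq_smul_one]
        module
      rw [h3, mul_one, ← sub_eq_add_neg, Algebra.smul_def]
    · simp
  rw [eq_sub_iff_add_eq]
  simp only [slash, dotOp, Finset.sum_mul_sum]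
  rw [Finset.sum_comm (f := fun i j => ε i * Y i * (ε j * U j))]
  simp only [← Finset.sum_add_distrib, key, Finset.sum_ite_eq, Finset.mem_univ, if_true,
    Finset.smul_sum, Finset.sum_sub_distrib]
  simp [Nat.cast_smul_eq_nsmul]

lemma U_mul_dotYX (h : CliffordWeyl ε X U Y) (i : Fin m) :
    U i * dotOp Y X = dotOp Y X * U i + X i := by
  simp only [dotOp, Finset.mul_sum, Finset.sum_mul, ← mul_assoc, h.U_Y, add_mul,
    Finset.sum_add_distrib]
  simp [mul_assoc, (h.X_U _ i).eq]

lemma diracU_mul_dotYX (h : CliffordWeyl ε X U Y) :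
    slash ε U * dotOp Y X = dotOp Y X * slash ε U + slash ε X := by
  have hc : ∀ i, Commute (ε i) (dotOp Y X) := fun i => dotOp_commute (h.comm_Y i) (h.comm_X i)
  simp only [slash, Finset.sum_mul, Finset.mul_sum, ← Finset.sum_add_distrib]
  refine Finset.sum_congr rfl fun i _ => ?_
  rw [mul_assoc, h.U_mul_dotYX, mul_add, ← mul_assoc, (hc i).eq, mul_assoc]

lemma dotUX_mul_Y (h : CliffordWeyl ε X U Y) (j : Fin m) :
    dotOp U X * Y j = Y j * dotOp U X + X j := by
  simp only [dotOp, Finset.mul_sum, Finset.sum_mul]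
  simp only [mul_assoc, (h.X_Y _ j).eq]
  simp only [← mul_assoc, h.U_Y, add_mul, Finset.sum_add_distrib]
  simp

lemma dotUX_mul_slashY (h : CliffordWeyl ε X U Y) :
    dotOp U X * slash ε Y = slash ε Y * dotOp U X + slash ε X := by
  have hc : ∀ i, Commute (ε i) (dotOp U X) := fun i => dotOp_commute (h.comm_U i) (h.comm_X i)
  simp only [slash, Finset.sum_mul, Finset.mul_sum, ← Finset.sum_add_distrib]
  refine Finset.sum_congr rfl fun i _ => ?_
  rw [← mul_assoc, ← (hc i).eq, mul_assoc, h.dotUX_mul_Y, mul_add, ← mul_assoc]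

lemma dotYU_mul_U (h : CliffordWeyl ε X U Y) (i : Fin m) :
    dotOp Y U * U i = U i * dotOp Y U - U i := by
  rw [eq_sub_iff_add_eq]
  simp only [dotOp, Finset.mul_sum, Finset.sum_mul, ← mul_assoc, h.U_Y, add_mul,
    Finset.sum_add_distrib]
  simp [mul_assoc, (h.U_U _ i).eq]

lemma dotYU_mul_Y (h : CliffordWeyl ε X U Y) (i : Fin m) :
    dotOp Y U * Y i = Y i * dotOp Y U + Y i := by
  simp only [dotOp, Finset.mul_sum, Finset.sum_mul, mul_assoc, h.U_Y, mul_add,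
    Finset.sum_add_distrib]
  simp only [← mul_assoc, (h.Y_Y _ i).eq]
  simp

lemma dotYU_mul_dotUX (h : CliffordWeyl ε X U Y) :
    dotOp Y U * dotOp U X = dotOp U X * dotOp Y U - dotOp U X := by
  have hc : ∀ i, Commute (X i) (dotOp Y U) := fun i => dotOp_commute (h.X_Y i) (h.X_U i)
  simp only [dotOp.eq_def U X, Finset.sum_mul, Finset.mul_sum, ← Finset.sum_sub_distrib]
  refine Finset.sum_congr rfl fun i _ => ?_
  rw [← mul_assoc, h.dotYU_mul_U, sub_mul, mul_assoc, ← (hc i).eq, mul_assoc]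

lemma dotYU_mul_slashY (h : CliffordWeyl ε X U Y) :
    dotOp Y U * slash ε Y = slash ε Y * dotOp Y U + slash ε Y := by
  have hc : ∀ i, Commute (ε i) (dotOp Y U) := fun i => dotOp_commute (h.comm_Y i) (h.comm_U i)
  simp only [slash, Finset.sum_mul, Finset.mul_sum, ← Finset.sum_add_distrib]
  refine Finset.sum_congr rfl fun i _ => ?_
  rw [← mul_assoc, ← (hc i).eq, mul_assoc, h.dotYU_mul_Y, mul_add, ← mul_assoc]

end CliffordWeyl

lemma CliffordWeyl.howeRelations {M : Type*} [AddCommGroup M] [Module ℝ M]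
    {ε X U Y : Fin m → Module.End ℝ M} (h : CliffordWeyl ε X U Y) :
    HoweRelations (m : ℝ) (slash ε X) (slash ε U) (slash ε Y) (dotOp U X) (dotOp Y X)
      (dotOp X X) (dotOp Y U) := by
  have hX : ∀ {c : Module.End ℝ M}, (∀ i, Commute (ε i) c) → (∀ i, Commute (X i) c) →
      ∀ f, slash ε X (c f) = c (slash ε X f) :=
    fun h1 h2 f => LinearMap.congr_fun (slash_commute h1 h2).eq f
  have hU : ∀ {c : Module.End ℝ M}, (∀ i, Commute (ε i) c) → (∀ i, Commute (U i) c) →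
      ∀ f, slash ε U (c f) = c (slash ε U f) :=
    fun h1 h2 f => LinearMap.congr_fun (slash_commute h1 h2).eq f
  have hY : ∀ {c : Module.End ℝ M}, (∀ i, Commute (ε i) c) → (∀ i, Commute (Y i) c) →
      ∀ f, slash ε Y (c f) = c (slash ε Y f) :=
    fun h1 h2 f => LinearMap.congr_fun (slash_commute h1 h2).eq f
  have hUX : ∀ i j, Commute (U i) (X j) := fun i j => (h.X_U j i).symm
  have hYX : ∀ i j, Commute (Y i) (X j) := fun i j => (h.X_Y j i).symm
  have hεA := fun i => dotOp_commute (h.comm_U i) (h.comm_X i)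
  have hεB := fun i => dotOp_commute (h.comm_Y i) (h.comm_X i)
  have hεL := fun i => dotOp_commute (h.comm_X i) (h.comm_X i)
  have hεE := fun i => dotOp_commute (h.comm_Y i) (h.comm_U i)
  refine
    { Du_Dx := fun f => eq_sub_of_add_eq <| LinearMap.congr_fun
        (slash_anticomm h.clifford h.comm_U h.comm_X hUX) f
      Dx_u := fun f => eq_sub_of_add_eq <| LinearMap.congr_fun
        ((add_comm _ _).trans (slash_anticomm h.clifford h.comm_Y h.comm_X hYX)) f
      Dx_Dx := fun f => LinearMap.congr_fun (slash_sq h.clifford h.comm_X h.X_X) f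
      Du_u := fun f => LinearMap.congr_fun h.diracU_mul_slashY f
      Du_B := fun f => LinearMap.congr_fun h.diracU_mul_dotYX f
      A_u := fun f => LinearMap.congr_fun h.dotUX_mul_slashY f
      A_Dx := fun f => (hX hεA (fun i => dotOp_commute (h.X_U i) (h.X_X i)) f).symm
      Dx_B := hX hεB (fun i => dotOp_commute (h.X_Y i) (h.X_X i))
      B_u := fun f => (hY hεB (fun i => dotOp_commute (h.Y_Y i) (hYX i)) f).symm
      Du_A := hU hεA (fun i => dotOp_commute (h.U_U i) (hUX i))
      Du_L := hU hεL (fun i => dotOp_commute (hUX i) (hUX i))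
      L_u := fun f => (hY hεL (fun i => dotOp_commute (hYX i) (hYX i)) f).symm
      E_A := fun f => LinearMap.congr_fun h.dotYU_mul_dotUX f
      E_u := fun f => LinearMap.congr_fun h.dotYU_mul_slashY f
      E_Dx := fun f => (hX hεE (fun i => dotOp_commute (h.X_Y i) (h.X_U i)) f).symm
      E_L := fun f => ?_ }
  have hXE : ∀ i, Commute (X i) (dotOp Y U) := fun i => dotOp_commute (h.X_Y i) (h.X_U i)
  exact LinearMap.congr_fun
    (dotOp_commute (fun i => (hXE i).symm) (fun i => (hXE i).symm)).eq f

end CliffordWeyl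

section SmoothFunctions

open scoped ContDiff

variable {m : ℕ} {Cl : Type*} [NormedRing Cl] [NormedAlgebra ℝ Cl]

/-- The submodule of smooth functions in the space of all functions `ℝ^m × ℝ^m → Cl`. -/
def smoothSubmodule (m : ℕ) (Cl : Type*) [NormedRing Cl] [NormedAlgebra ℝ Cl] :
    Submodule ℝ ((Fin m → ℝ) × (Fin m → ℝ) → Cl) where
  carrier := {F | ContDiff ℝ ∞ F}
  zero_mem' := Set.mem_ofPred_eq ▸ contDiff_const
  add_mem' {F G} (hF : ContDiff ℝ ∞ F) (hG : ContDiff ℝ ∞ G) := hF.add hG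
  smul_mem' c F (hF : ContDiff ℝ ∞ F) := hF.const_smul c

/-- The space of smooth `Cl`-valued functions on `ℝ^m × ℝ^m`. -/
abbrev SmoothFun (m : ℕ) (Cl : Type*) [NormedRing Cl] [NormedAlgebra ℝ Cl] :
    Type _ :=
  ↥(smoothSubmodule m Cl)

lemma SmoothFun.contDiff (F : SmoothFun m Cl) : ContDiff ℝ ∞ F.1 := F.2

lemma SmoothFun.differentiableAt (F : SmoothFun m Cl) (p : (Fin m → ℝ) × (Fin m → ℝ)) :
    DifferentiableAt ℝ F.1 p :=
  F.contDiff.contDiffAt.differentiableAt (by simp)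

/-- The directional derivative along `v`. -/
noncomputable def dirDeriv (v : (Fin m → ℝ) × (Fin m → ℝ)) :
    Module.End ℝ (SmoothFun m Cl) where
  toFun F := ⟨fun p => fderiv ℝ F.1 p v,
    (F.contDiff.fderiv_right (m := ∞) (by simp)).clm_apply contDiff_const⟩
  map_add' F G := by
    ext p
    simp [fderiv_add (F.differentiableAt p) (G.differentiableAt p)]
  map_smul' c F := by
    ext p
    simp [fderiv_const_smul (F.differentiableAt p) c]

/-- Left multiplication by a constant. -/
def constMul (c : Cl) : Module.End ℝ (SmoothFun m Cl) where
  toFun F := ⟨fun p => c * F.1 p, contDiff_const.mul F.contDiff⟩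
  map_add' F G := by ext p; simp [mul_add]
  map_smul' r F := by ext p; simp

/-- Multiplication by the coordinate `u_j`. -/
def coordMul (j : Fin m) : Module.End ℝ (SmoothFun m Cl) where
  toFun F := ⟨fun p => p.2 j • F.1 p,
    ((contDiff_apply ℝ ℝ j).comp contDiff_snd).smul F.contDiff⟩
  map_add' F G := by ext p; simp
  map_smul' r F := by ext p; simp [smul_comm r]

lemma dirDeriv_commute (v w : (Fin m → ℝ) × (Fin m → ℝ)) :
    Commute (dirDeriv v : Module.End ℝ (SmoothFun m Cl)) (dirDeriv w) := by
  ext F p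
  have key : ∀ a b : (Fin m → ℝ) × (Fin m → ℝ),
      fderiv ℝ (fun q => fderiv ℝ F.1 q b) p a = fderiv ℝ (fderiv ℝ F.1) p a b := by
    intro a b
    have hd : DifferentiableAt ℝ (fderiv ℝ F.1) p :=
      (F.contDiff.fderiv_right (m := ∞) (by simp)).contDiffAt.differentiableAt (by simp)
    rw [fderiv_clm_apply hd (differentiableAt_const b)]
    simp
  change fderiv ℝ (fun q => fderiv ℝ F.1 q w) p v = fderiv ℝ (fun q => fderiv ℝ F.1 q v) p w
  rw [key, key]
  exact (F.contDiff.contDiffAt.isSymmSndFDerivAt (n := ∞)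
    (by rw [minSmoothness_of_isRCLikeNormedField]; exact WithTop.coe_le_coe.2 le_top)) v w

lemma constMul_commute_dirDeriv (c : Cl) (v : (Fin m → ℝ) × (Fin m → ℝ)) :
    Commute (constMul c : Module.End ℝ (SmoothFun m Cl)) (dirDeriv v) := by
  ext F p
  change c * fderiv ℝ F.1 p v = fderiv ℝ (fun q => c * F.1 q) p v
  rw [fderiv_const_mul (F.differentiableAt p)]
  rfl

lemma constMul_commute_coordMul (c : Cl) (j : Fin m) :
    Commute (constMul c : Module.End ℝ (SmoothFun m Cl)) (coordMul j) := by
  ext F p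
  exact mul_smul_comm _ _ _

lemma coordMul_commute (i j : Fin m) :
    Commute (coordMul i : Module.End ℝ (SmoothFun m Cl)) (coordMul j) := by
  ext F p
  exact smul_comm _ _ _

lemma dirDeriv_mul_coordMul (v : (Fin m → ℝ) × (Fin m → ℝ)) (j : Fin m) :
    (dirDeriv v * coordMul j : Module.End ℝ (SmoothFun m Cl)) =
      coordMul j * dirDeriv v + v.2 j • (1 : Module.End ℝ (SmoothFun m Cl)) := by
  ext F p
  have hc : HasFDerivAt (fun q : (Fin m → ℝ) × (Fin m → ℝ) => q.2 j)
      ((ContinuousLinearMap.proj j).comp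
        (ContinuousLinearMap.snd ℝ (Fin m → ℝ) (Fin m → ℝ))) p :=
    ContinuousLinearMap.hasFDerivAt ((ContinuousLinearMap.proj (R := ℝ) j).comp
      (ContinuousLinearMap.snd ℝ (Fin m → ℝ) (Fin m → ℝ)))
  change fderiv ℝ (fun q : (Fin m → ℝ) × (Fin m → ℝ) => q.2 j • F.1 q) p v =
    p.2 j • fderiv ℝ F.1 p v + v.2 j • F.1 p
  rw [fderiv_fun_smul hc.differentiableAt (F.differentiableAt p), hc.fderiv]
  rfl

/-- The partial derivative in `x_j`, as an operator on smooth functions. -/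
noncomputable def opX (j : Fin m) : Module.End ℝ (SmoothFun m Cl) :=
  dirDeriv (Pi.single j 1, 0)

/-- The partial derivative in `u_j`, as an operator on smooth functions. -/
noncomputable def opU (j : Fin m) : Module.End ℝ (SmoothFun m Cl) :=
  dirDeriv (0, Pi.single j 1)

lemma cliffordWeyl_smoothFun {e : Fin m → Cl} (hrel : CliffordRel e) :
    CliffordWeyl (fun j => (constMul (e j) : Module.End ℝ (SmoothFun m Cl))) opX opU
      coordMul where
  clifford i j := by
    ext F p
    have h := congrArg (· * F.1 p) (hrel i j)
    simp only [add_mul, mul_assoc] at h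
    refine h.trans ?_
    rw [← Algebra.smul_def]
    rfl
  comm_X i j := constMul_commute_dirDeriv _ _
  comm_U i j := constMul_commute_dirDeriv _ _
  comm_Y i j := constMul_commute_coordMul _ _
  X_X i j := dirDeriv_commute _ _
  U_U i j := dirDeriv_commute _ _
  Y_Y i j := coordMul_commute i j
  X_U i j := dirDeriv_commute _ _
  X_Y i j := by
    have h := dirDeriv_mul_coordMul (Cl := Cl) (Pi.single i 1, (0 : Fin m → ℝ)) j
    exact h.trans (by simp [opX])
  U_Y i j := by
    refine (dirDeriv_mul_coordMul (Cl := Cl) ((0 : Fin m → ℝ), Pi.single i 1) j).trans ?_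
    rcases eq_or_ne i j with rfl | hij
    · simp [opU]
    · simp [opU, hij]

/-- A smooth function on `ℝ^m × ℝ^m` as a function of two variables. -/
def SmoothFun.curry (F : SmoothFun m Cl) (x u : Fin m → ℝ) : Cl := F.1 (x, u)

lemma curry_sub (F G : SmoothFun m Cl) (x u : Fin m → ℝ) :
    (F - G).curry x u = F.curry x u - G.curry x u := rfl

lemma curry_neg (F : SmoothFun m Cl) (x u : Fin m → ℝ) :
    (-F).curry x u = -F.curry x u := rfl

lemma curry_smul (c : ℝ) (F : SmoothFun m Cl) (x u : Fin m → ℝ) :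
    (c • F).curry x u = c • F.curry x u := rfl

lemma pdx_curry (j : Fin m) (F : SmoothFun m Cl) : pdx j F.curry = (opX j F).curry := by
  funext x u
  have h : HasFDerivAt (fun y : Fin m → ℝ => (y, u))
      (ContinuousLinearMap.inl ℝ (Fin m → ℝ) (Fin m → ℝ)) x := hasFDerivAt_prodMk_left x u
  have h2 := ((F.differentiableAt (x, u)).hasFDerivAt.comp x h).fderiv
  change fderiv ℝ (F.1 ∘ fun y => (y, u)) x (Pi.single j 1) = fderiv ℝ F.1 (x, u) _
  rw [h2]
  rfl

lemma pdu_curry (j : Fin m) (F : SmoothFun m Cl) : pdu j F.curry = (opU j F).curry := by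
  funext x u
  have h : HasFDerivAt (fun y : Fin m → ℝ => (x, y))
      (ContinuousLinearMap.inr ℝ (Fin m → ℝ) (Fin m → ℝ)) u := hasFDerivAt_prodMk_right x u
  have h2 := ((F.differentiableAt (x, u)).hasFDerivAt.comp u h).fderiv
  change fderiv ℝ (F.1 ∘ fun y => (x, y)) u (Pi.single j 1) = fderiv ℝ F.1 (x, u) _
  rw [h2]
  rfl

lemma curry_sum_apply {ι : Type*} (s : Finset ι) (T : ι → Module.End ℝ (SmoothFun m Cl))
    (F : SmoothFun m Cl) (x u : Fin m → ℝ) :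
    ((∑ i ∈ s, T i) F).curry x u = ∑ i ∈ s, (T i F).curry x u := by
  simp [SmoothFun.curry, LinearMap.sum_apply]

/-- The operator `D_x` on smooth functions. -/
noncomputable def opDx (e : Fin m → Cl) : Module.End ℝ (SmoothFun m Cl) :=
  slash (fun j => constMul (e j)) opX

/-- The operator `D_u` on smooth functions. -/
noncomputable def opDu (e : Fin m → Cl) : Module.End ℝ (SmoothFun m Cl) :=
  slash (fun j => constMul (e j)) opU

/-- Left Clifford multiplication by `u` on smooth functions. -/
noncomputable def opMulU (e : Fin m → Cl) : Module.End ℝ (SmoothFun m Cl) :=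
  slash (fun j => constMul (e j)) coordMul

lemma diracx_curry (e : Fin m → Cl) (F : SmoothFun m Cl) :
    diracx e F.curry = (opDx e F).curry := by
  funext x u
  simp only [diracx, opDx, slash, curry_sum_apply, pdx_curry]
  rfl

lemma diracu_curry (e : Fin m → Cl) (F : SmoothFun m Cl) :
    diracu e F.curry = (opDu e F).curry := by
  funext x u
  simp only [diracu, opDu, slash, curry_sum_apply, pdu_curry]
  rfl

lemma opMulU_curry (e : Fin m → Cl) (F : SmoothFun m Cl) (x u : Fin m → ℝ) :
    (opMulU e F).curry x u = emb e u * F.curry x u := by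
  simp only [opMulU, slash, curry_sum_apply, emb, Finset.sum_mul, smul_mul_assoc]
  exact Finset.sum_congr rfl fun j _ => mul_smul_comm _ _ _

lemma PpU_curry (e : Fin m → Cl) (k : ℕ) (F : SmoothFun m Cl) :
    PpU e k F.curry = (projPlus ((m : ℝ) + 2 * k - 2) (opDu e) (opMulU e) F).curry := by
  funext x u
  simp only [PpU, diracu_curry, ← opMulU_curry]
  rfl

lemma PmU_curry (e : Fin m → Cl) (k : ℕ) (F : SmoothFun m Cl) :
    PmU e k F.curry = (projMinus ((m : ℝ) + 2 * k - 2) (opDu e) (opMulU e) F).curry := by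
  funext x u
  simp only [PmU, diracu_curry, ← opMulU_curry]
  rfl

lemma mixDer_curry (F : SmoothFun m Cl) : mixDer F.curry = (dotOp opU opX F).curry := by
  funext x u
  simp only [mixDer, dotOp, curry_sum_apply, pdx_curry, pdu_curry]
  rfl

lemma opMulU_opMulU {e : Fin m → Cl} (hrel : CliffordRel e) (F : SmoothFun m Cl) :
    opMulU e (opMulU e F) = -dotOp coordMul coordMul F :=
  have h := cliffordWeyl_smoothFun hrel
  LinearMap.congr_fun (slash_sq h.clifford h.comm_Y h.Y_Y) F

lemma bosonic_curry {e : Fin m → Cl} (hrel : CliffordRel e) (k : ℕ) (F : SmoothFun m Cl) :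
    bosonic k F.curry =
      (dotOp opX opX F - (4 / ((m : ℝ) + 2 * k - 2)) • dotOp coordMul opX (dotOp opU opX F)
        - (4 / (((m : ℝ) + 2 * k - 2) * ((m : ℝ) + 2 * k - 2 - 2))) •
          opMulU e (opMulU e (dotOp opU opX (dotOp opU opX F)))).curry := by
  funext x u
  have h1 : lapx F.curry x u = (dotOp opX opX F).curry x u := by
    simp only [lapx, dotOp, curry_sum_apply, pdx_curry]
    rfl
  have h2 : ∀ G : SmoothFun m Cl,
      ∑ s, u s • pdx s G.curry x u = (dotOp coordMul opX G).curry x u := by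
    intro G
    simp only [dotOp, curry_sum_apply, pdx_curry]
    rfl
  have h3 : ∀ G : SmoothFun m Cl,
      (∑ i, u i ^ 2) • G.curry x u = (dotOp coordMul coordMul G).curry x u := by
    intro G
    simp only [dotOp, curry_sum_apply, Finset.sum_smul, pow_two, mul_smul]
    rfl
  rw [opMulU_opMulU hrel, smul_neg, sub_neg_eq_add]
  simp only [bosonic, mixDer_curry, h1, h2, h3]
  rw [show (m : ℝ) + 2 * k - 4 = m + 2 * k - 2 - 2 by ring]
  rfl

lemma IsHomPoly.contDiff {k : ℕ} {g : (Fin m → ℝ) → Cl} (hg : IsHomPoly k g) :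
    ContDiff ℝ ∞ g := by
  induction hg using Submodule.span_induction with
  | mem g hg =>
    obtain ⟨α, c, -, rfl⟩ := hg
    exact (contDiff_prod fun i _ => (contDiff_apply ℝ ℝ i).pow (α i)).smul contDiff_const
  | zero => exact contDiff_const
  | add f g _ _ hf hg => exact hf.add hg
  | smul c f _ hf => exact hf.const_smul c

lemma IsHomPoly.map_smul {k : ℕ} {g : (Fin m → ℝ) → Cl} (hg : IsHomPoly k g) (t : ℝ)
    (u : Fin m → ℝ) : g (t • u) = t ^ k • g u := by
  induction hg using Submodule.span_induction with
  | mem g hg =>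
    obtain ⟨α, c, rfl, rfl⟩ := hg
    simp [mul_pow, Finset.prod_mul_distrib, Finset.prod_pow_eq_pow_sum, mul_smul]
  | zero => simp
  | add f g _ _ hf hg => simp [hf, hg]
  | smul c f _ hf => simp [hf, smul_comm c]

/-- Euler's identity for homogeneous polynomials. -/
lemma IsHomPoly.euler {k : ℕ} {g : (Fin m → ℝ) → Cl} (hg : IsHomPoly k g) (u : Fin m → ℝ) :
    ∑ j, u j • pd j g u = (k : ℝ) • g u := by
  have hd : HasFDerivAt g (fderiv ℝ g u) ((1 : ℝ) • u) := by
    rw [one_smul]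
    exact (hg.contDiff.contDiffAt.differentiableAt (by simp)).hasFDerivAt
  have hl : HasDerivAt (fun t : ℝ => t • u) u 1 := by
    simpa using (hasDerivAt_id (1 : ℝ)).smul_const u
  have h1 : HasDerivAt (fun t : ℝ => g (t • u)) (fderiv ℝ g u u) 1 := hd.comp_hasDerivAt 1 hl
  have h2 : HasDerivAt (fun t : ℝ => g (t • u)) ((k : ℝ) • g u) 1 := by
    simp only [hg.map_smul]
    simpa using (hasDerivAt_pow k (1 : ℝ)).smul_const (g u)
  rw [← h1.unique h2]
  calc ∑ j, u j • pd j g u = fderiv ℝ g u (∑ j, u j • Pi.single j 1) := by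
        simp only [map_sum, _root_.map_smul, pd]
    _ = fderiv ℝ g u u := by rw [← pi_eq_sum_univ' u]

lemma dotOp_coordMul_opU_curry (F : SmoothFun m Cl) (x u : Fin m → ℝ) :
    (dotOp coordMul opU F).curry x u = ∑ j, u j • pd j (F.curry x) u := by
  simp only [dotOp, curry_sum_apply]
  refine Finset.sum_congr rfl fun j _ => ?_
  change u j • (opU j F).curry x u = u j • pdu j F.curry x u
  rw [pdu_curry]

lemma dotOp_coordMul_opU_eq {k : ℕ} {F : SmoothFun m Cl}
    (hF : ∀ x, IsHomPoly k (F.curry x)) : dotOp coordMul opU F = (k : ℝ) • F := by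
  ext ⟨x, u⟩
  exact (dotOp_coordMul_opU_curry F x u).trans ((hF x).euler u)

lemma opDu_eq_zero {e : Fin m → Cl} {F : SmoothFun m Cl}
    (hF : ∀ x, dirac e (F.curry x) = 0) : opDu e F = 0 := by
  ext ⟨x, u⟩
  change (opDu e F).curry x u = 0
  rw [← diracu_curry]
  exact congrFun (hF x) u

lemma dirac_emb_mul {e : Fin m → Cl} (hrel : CliffordRel e) {k : ℕ} {q : (Fin m → ℝ) → Cl}
    (hq : IsHomPoly k q) (hD : dirac e q = 0) (u : Fin m → ℝ) :
    dirac e (fun v => emb e v * q v) u = -((m : ℝ) + 2 * k) • q u := by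
  let G : SmoothFun m Cl := ⟨fun p => q p.2, hq.contDiff.comp contDiff_snd⟩
  have hE : dotOp coordMul opU G = (k : ℝ) • G := dotOp_coordMul_opU_eq fun _ => hq
  have hDG : opDu e G = 0 := opDu_eq_zero fun _ => hD
  have h : opDu e (opMulU e G) = -((m : ℝ) + 2 * k) • G := by
    have h1 := (cliffordWeyl_smoothFun hrel).howeRelations.Du_u G
    change opDu e (opMulU e G) = _ - _ - opMulU e (opDu e G) at h1
    rw [h1, hE, hDG, map_zero]
    module
  have h2 := congrArg (fun F : SmoothFun m Cl => F.curry 0 u) h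
  simp only [← diracu_curry] at h2
  have h3 : (opMulU e G).curry = fun _ v => emb e v * q v := by
    funext x v
    exact opMulU_curry e G x v
  rw [h3] at h2
  exact h2

/-- A smooth function with values in `uM_k` is `u` times a smooth function with values
in `M_k`. -/
lemma exists_opMulU_eq {e : Fin m → Cl} (hrel : CliffordRel e) {k : ℕ}
    (hmk : (m : ℝ) + 2 * k ≠ 0) (F : SmoothFun m Cl)
    (hF : ∀ x, ∃ q : (Fin m → ℝ) → Cl, IsHomPoly k q ∧ dirac e q = 0 ∧
      F.curry x = fun u => emb e u * q u) :
    ∃ G : SmoothFun m Cl, F = opMulU e G ∧ opDu e G = 0 ∧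
      dotOp coordMul opU G = (k : ℝ) • G := by
  choose q hq hD hFq using hF
  let G : SmoothFun m Cl := -((m : ℝ) + 2 * k)⁻¹ • opDu e F
  have hG : ∀ x, G.curry x = q x := by
    intro x
    funext u
    change -((m : ℝ) + 2 * k)⁻¹ • (opDu e F).curry x u = q x u
    rw [← diracu_curry]
    change -((m : ℝ) + 2 * k)⁻¹ • dirac e (F.curry x) u = q x u
    rw [hFq, dirac_emb_mul hrel (hq x) (hD x), smul_smul, neg_mul_neg, inv_mul_cancel₀ hmk,
      one_smul]
  refine ⟨G, ?_, opDu_eq_zero fun x => ?_, dotOp_coordMul_opU_eq fun x => ?_⟩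
  · ext ⟨x, u⟩
    refine (congrFun (hFq x) u).trans ?_
    rw [← hG]
    exact (opMulU_curry e G x u).symm
  · rw [hG]; exact hD x
  · rw [hG]; exact hq x

end SmoothFunctions

/-- For `m ≥ 3`, `k ≥ 1`, write `f ∈ C^∞(ℝ^m, H_k)` as `f = f₁ + f₂` via
the Almansi–Fischer decomposition, with `f₁ ∈ C^∞(ℝ^m, M_k)` and `f₂ ∈ C^∞(ℝ^m, uM_{k-1})`.
Then the bosonic Laplacian acts as
`D_k f = −R_k² P_k^+ f₁ + (2/(m+2k−4)) R_k T_k P_k^- f₂ − (2/(m+2k−4)) Q_k T_k^* P_k^+ f₁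
− ((m+2k)/(m+2k−4)) Q_k² P_k^- f₂`. -/
theorem stmt12 {m k : ℕ} (hm : 3 ≤ m) (hk : 1 ≤ k) {Cl : Type*} [NormedRing Cl]
    [NormedAlgebra ℝ Cl] (e : Fin m → Cl) (hrel : CliffordRel e)
    (f f₁ f₂ : (Fin m → ℝ) → (Fin m → ℝ) → Cl)
    (hf₁ : ContDiff ℝ (⊤ : ℕ∞) (fun p : (Fin m → ℝ) × (Fin m → ℝ) => f₁ p.1 p.2))
    (hf₂ : ContDiff ℝ (⊤ : ℕ∞) (fun p : (Fin m → ℝ) × (Fin m → ℝ) => f₂ p.1 p.2))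
    (hf₁M : ∀ x, IsHomPoly k (f₁ x) ∧ dirac e (f₁ x) = 0)
    (hf₂M : ∀ x, ∃ q : (Fin m → ℝ) → Cl, IsHomPoly (k - 1) q ∧ dirac e q = 0 ∧
      f₂ x = fun u => emb e u * q u)
    (hsum : f = fun x u => f₁ x u + f₂ x u) :
    ∀ x u, bosonic k f x u =
        -(PpDx e k (PpDx e k (PpU e k f₁)) x u)
          + (2 / ((m : ℝ) + 2 * k - 4)) • PpDx e k (PpDx e k (PmU e k f₂)) x u
          - (2 / ((m : ℝ) + 2 * k - 4)) • PmDx e k (PmDx e k (PpU e k f₁)) x u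
          - (((m : ℝ) + 2 * k) / ((m : ℝ) + 2 * k - 4)) •
              PmDx e k (PmDx e k (PmU e k f₂)) x u := by
  intro x u
  let F₁ : SmoothFun m Cl := ⟨fun p => f₁ p.1 p.2, hf₁⟩
  let F₂ : SmoothFun m Cl := ⟨fun p => f₂ p.1 p.2, hf₂⟩
  have hm' : (3 : ℝ) ≤ m := by exact_mod_cast hm
  have hk' : (1 : ℝ) ≤ k := by exact_mod_cast hk
  have hk1 : ((k - 1 : ℕ) : ℝ) = k - 1 := by rw [Nat.cast_sub hk, Nat.cast_one]
  have hN : (m : ℝ) + 2 * k - 2 ≠ 0 := by linarith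
  have hN2 : (m : ℝ) + 2 * k - 2 - 2 ≠ 0 := by linarith
  have hμ : (m : ℝ) = (m + 2 * k - 2) + 2 - 2 * k := by ring
  obtain ⟨G, hFG, hDG, hEG⟩ := exists_opMulU_eq hrel (k := k - 1)
    (by rw [hk1]; linarith) F₂ hf₂M
  rw [hk1] at hEG
  have hrels : HoweRelations (m : ℝ) (opDx e) (opDu e) (opMulU e) (dotOp opU opX)
      (dotOp coordMul opX) (dotOp opX opX) (dotOp coordMul opU) :=
    (cliffordWeyl_smoothFun hrel).howeRelations
  have h₁ := hrels.bosonic_monogenic hμ hN hN2 (f := F₁)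
    (opDu_eq_zero fun x => (hf₁M x).2) (dotOp_coordMul_opU_eq fun x => (hf₁M x).1)
  have h₂ := hrels.bosonic_u_mul_monogenic hμ hN hN2 hDG hEG
  have hf : f = (F₁ + F₂).curry := hsum
  have e₁ : f₁ = F₁.curry := rfl
  have e₂ : f₂ = (opMulU e G).curry := by rw [← hFG]; rfl
  have hb : bosonic k f x u = bosonic k F₁.curry x u + bosonic k (opMulU e G).curry x u := by
    rw [hf, hFG]
    simp only [bosonic_curry hrel, map_add]
    change (_ : SmoothFun m Cl).curry x u = (_ + _ : SmoothFun m Cl).curry x u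
    congr 1
    module
  rw [hb, bosonic_curry hrel, bosonic_curry hrel, h₁, h₂, e₁, e₂]
  simp only [PpDx, PmDx, PpU_curry, PmU_curry, diracx_curry]
  rw [show (m : ℝ) + 2 * k - 4 = m + 2 * k - 2 - 2 by ring,
    show ((m : ℝ) + 2 * k) / (m + 2 * k - 2 - 2) =
      (m + 2 * k - 2 + 2) / (m + 2 * k - 2 - 2) by rw [sub_add_cancel]]
  simp only [curry_sub, curry_neg, curry_smul]
  abel
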